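/- Let τ = (1 + √5)/2 and p = 10. Then the lattice S(p,τ) is generated by the union of two mirror stabilizers: the subgroup of GL(3,ℂ) generated by Stab(m₁) ∪ Stab(m₂) equals S(p,τ), where m₁ is the mirror of the complex reflection R₁ and m₂ = span_ℂ{e₁, R₂·e₃} is the mirror of the complex reflection (R₁·R₂R₃R₂⁻¹)³. -/

import Mathlib

open Matrix

noncomputable section

/-- `u = exp(2πi/(3p))`. -/
def uPar (p : ℕ) : ℂ := Complex.exp (2 * Real.pi * Complex.I / (3 * p))

/-- `α = 2 − u³ − conj(u)³`. -/
def alphaPar (p : ℕ) : ℂ :=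
  2 - uPar p ^ 3 - starRingEnd ℂ (uPar p) ^ 3

/-- `β = (conj(u)² − u)·τ`. -/
def betaPar (p : ℕ) (τ : ℂ) : ℂ := (starRingEnd ℂ (uPar p) ^ 2 - uPar p) * τ

/-- The generator `R₁` of `S(p,τ)`. -/
def R1S (p : ℕ) (τ : ℂ) : Matrix (Fin 3) (Fin 3) ℂ :=
  !![uPar p ^ 2, τ, -(uPar p) * starRingEnd ℂ τ;
     0, starRingEnd ℂ (uPar p), 0;
     0, 0, starRingEnd ℂ (uPar p)]

/-- The reflection `R₂ = J·R₁·J⁻¹` of `S(p,τ)`. -/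
def R2S (p : ℕ) (τ : ℂ) : Matrix (Fin 3) (Fin 3) ℂ :=
  !![starRingEnd ℂ (uPar p), 0, 0;
     -(uPar p) * starRingEnd ℂ τ, uPar p ^ 2, τ;
     0, 0, starRingEnd ℂ (uPar p)]

/-- The reflection `R₃ = J·R₂·J⁻¹` of `S(p,τ)`. -/
def R3S (p : ℕ) (τ : ℂ) : Matrix (Fin 3) (Fin 3) ℂ :=
  !![starRingEnd ℂ (uPar p), 0, 0;
     0, starRingEnd ℂ (uPar p), 0;
     τ, -(uPar p) * starRingEnd ℂ τ, uPar p ^ 2]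

/-- The cyclic permutation matrix `J`. -/
def Jmat : Matrix (Fin 3) (Fin 3) ℂ :=
  !![0, 0, 1; 1, 0, 0; 0, 1, 0]

/-- The linear functional `x ↦ a·x₁ + b·x₂ + c·x₃` on `ℂ³`. -/
def lfun (a b c : ℂ) : (Fin 3 → ℂ) →ₗ[ℂ] ℂ :=
  a • (LinearMap.proj 0 : (Fin 3 → ℂ) →ₗ[ℂ] ℂ) +
    b • (LinearMap.proj 1 : (Fin 3 → ℂ) →ₗ[ℂ] ℂ) +
    c • (LinearMap.proj 2 : (Fin 3 → ℂ) →ₗ[ℂ] ℂ)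

/-- The mirror of `R₁`: `{x ∈ ℂ³ : α·x₁ + β·x₂ + conj(β)·x₃ = 0}`,
the `H`-orthogonal complement of `e₁`. -/
def mirror1 (p : ℕ) (τ : ℂ) : Submodule ℂ (Fin 3 → ℂ) :=
  LinearMap.ker (lfun (alphaPar p) (betaPar p τ) (starRingEnd ℂ (betaPar p τ)))

/-- The stabilizer of a subspace `m` of `ℂ³` inside a subgroup `S` of `GL(3,ℂ)`:
the set of elements of `S` mapping `m` onto itself. -/
def mirrorStab (S : Subgroup (GL (Fin 3) ℂ)) (m : Submodule ℂ (Fin 3 → ℂ)) :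
    Set (GL (Fin 3) ℂ) :=
  {g | g ∈ S ∧ m.map (Matrix.mulVecLin (g : Matrix (Fin 3) (Fin 3) ℂ)) = m}

end

/-!
Write `r₂ = j r₁ j⁻¹`, `r₃ = j r₂ j⁻¹` and `x = r₂ r₃ r₂⁻¹`. Everything commuting with the complex
reflection `r₁` stabilizes its mirror `m₁`, while `x` is a complex reflection with root `R₂ e₃`, so
it stabilizes the plane `m₂`, which contains this root. When `τ² = τ + 1`, the relations `j³ = 1`
and `(r₁ j)⁵ = 1` turn `j` into the word `r₁ r₂ r₃ r₁ r₂`, and together with the braid relation of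
length 5 between `r₁` and `r₂` they imply that `y = (r₂ r₃) r₂ (r₂ r₃)⁻¹ = x r₂ x⁻¹` commutes with
`r₁`. Hence the two stabilizers together contain `r₁`, `x` and `y`, from which `r₂ = x⁻¹ y x`,
`r₃ = r₂⁻¹ x r₂` and `j` are recovered.
-/

open ComplexConjugate

section BraidRelation

variable {R A : Type*} [CommRing R] [Ring A] [Algebra R A] {a b : A} {d μ : R}

theorem smul_one_add_braid_sub_braid (haa : a * a = d • a) (hbb : b * b = d • b)
    (haba : a * b * a = μ • a) (hbab : b * a * b = μ • b) (c : R) :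
    (c • 1 + a) * (c • 1 + b) * (c • 1 + a) * (c • 1 + b) * (c • 1 + a) -
        (c • 1 + b) * (c • 1 + a) * (c • 1 + b) * (c • 1 + a) * (c • 1 + b) =
      (μ ^ 2 + 3 * (c * (c + d)) * μ + (c * (c + d)) ^ 2) • (a - b) := by
  have hbaa : b * a * a = d • (b * a) := by rw [mul_assoc, haa, mul_smul_comm]
  have habb : a * b * b = d • (a * b) := by rw [mul_assoc, hbb, mul_smul_comm]
  simp only [add_mul, mul_add, smul_mul_assoc, mul_smul_comm, one_mul, mul_one, smul_add,
    haa, hbb, haba, hbab, hbaa, habb]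
  match_scalars <;> ring

end BraidRelation

section GroupTheory

variable {G : Type*} [Group G] {r₁ r₂ r₃ j : G}

theorem mul_word_eq_of_pow_eq_one (h₂ : j * r₁ * j⁻¹ = r₂) (h₃ : j * r₂ * j⁻¹ = r₃)
    (hj : j ^ 3 = 1) (hrj : (r₁ * j) ^ 5 = 1) : r₁ * r₂ * r₃ * r₁ * r₂ = j := by
  have hj_inv : j⁻¹ * j⁻¹ = j := by
    rw [← _root_.mul_inv_rev, inv_eq_iff_mul_eq_one, ← pow_two, ← pow_succ, hj]
  calc r₁ * r₂ * r₃ * r₁ * r₂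
      = r₁ * j * r₁ * j * r₁ * (j⁻¹ * j⁻¹) * r₁ * j * r₁ * j⁻¹ := by
        rw [← h₃, ← h₂]
        group
    _ = r₁ * j * r₁ * j * r₁ * j * r₁ * j * r₁ * j⁻¹ := by rw [hj_inv]
    _ = (r₁ * j) ^ 5 * (j⁻¹ * j⁻¹) := by simp [pow_succ, mul_assoc]
    _ = j := by rw [hrj, hj_inv, one_mul]

theorem commute_conj_of_braid (h₂ : j * r₁ * j⁻¹ = r₂) (h₃ : j * r₂ * j⁻¹ = r₃)
    (hword : r₁ * r₂ * r₃ * r₁ * r₂ = j)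
    (hbraid : r₁ * r₂ * r₁ * r₂ * r₁ = r₂ * r₁ * r₂ * r₁ * r₂) :
    Commute r₁ (r₂ * r₃ * r₂ * (r₂ * r₃)⁻¹) := by
  have hprod : r₁ * (r₂ * r₃) = j * (r₁ * r₂)⁻¹ := by
    rw [eq_mul_inv_iff_mul_eq, ← hword]
    group
  have hswap : (r₁ * r₂)⁻¹ * r₂ * (r₁ * r₂) = r₁ * r₂ * r₁ * (r₁ * r₂)⁻¹ := by
    rw [eq_mul_inv_iff_mul_eq, ← mul_right_inj (r₁ * r₂)]
    simpa [mul_assoc] using hbraid.symm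
  rw [Commute, SemiconjBy, ← mul_inv_eq_iff_eq_mul]
  calc r₁ * (r₂ * r₃ * r₂ * (r₂ * r₃)⁻¹) * r₁⁻¹
      = r₁ * (r₂ * r₃) * r₂ * (r₁ * (r₂ * r₃))⁻¹ := by group
    _ = j * ((r₁ * r₂)⁻¹ * r₂ * (r₁ * r₂)) * j⁻¹ := by
        rw [hprod]
        group
    _ = j * (r₁ * r₂ * r₁ * (r₁ * r₂)⁻¹) * j⁻¹ := by rw [hswap]
    _ = r₂ * r₃ * r₂ * (r₂ * r₃)⁻¹ := by
        rw [← h₃, ← h₂]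
        group

theorem closure_pair_le_of_braid (h₂ : j * r₁ * j⁻¹ = r₂) (h₃ : j * r₂ * j⁻¹ = r₃)
    (hj : j ^ 3 = 1) (hrj : (r₁ * j) ^ 5 = 1)
    (hbraid : r₁ * r₂ * r₁ * r₂ * r₁ = r₂ * r₁ * r₂ * r₁ * r₂) {K : Subgroup G}
    (hcomm : ∀ g ∈ Subgroup.closure {r₁, j}, Commute r₁ g → g ∈ K)
    (hconj : r₂ * r₃ * r₂⁻¹ ∈ K) : Subgroup.closure {r₁, j} ≤ K := by
  have hword := mul_word_eq_of_pow_eq_one h₂ h₃ hj hrj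
  have hr₁S : r₁ ∈ Subgroup.closure {r₁, j} := Subgroup.subset_closure (by simp)
  have hjS : j ∈ Subgroup.closure {r₁, j} := Subgroup.subset_closure (by simp)
  have hr₂S : r₂ ∈ Subgroup.closure {r₁, j} := h₂ ▸ mul_mem (mul_mem hjS hr₁S) (inv_mem hjS)
  have hr₃S : r₃ ∈ Subgroup.closure {r₁, j} := h₃ ▸ mul_mem (mul_mem hjS hr₂S) (inv_mem hjS)
  have hr₁ : r₁ ∈ K := hcomm r₁ hr₁S (Commute.refl r₁)
  have hy : r₂ * r₃ * r₂ * (r₂ * r₃)⁻¹ ∈ K :=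
    hcomm _ (mul_mem (mul_mem (mul_mem hr₂S hr₃S) hr₂S) (inv_mem (mul_mem hr₂S hr₃S)))
      (commute_conj_of_braid h₂ h₃ hword hbraid)
  have hr₂ : r₂ ∈ K := by
    convert mul_mem (mul_mem (inv_mem hconj) hy) hconj using 1
    group
  have hr₃ : r₃ ∈ K := by
    convert mul_mem (mul_mem (inv_mem hr₂) hconj) hr₂ using 1
    group
  have hjK : j ∈ K := hword ▸ mul_mem (mul_mem (mul_mem (mul_mem hr₁ hr₂) hr₃) hr₁) hr₂
  simp [Subgroup.closure_le, Set.insert_subset_iff, hr₁, hjK]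

end GroupTheory

section ScaledReflection

variable {n R : Type*} [Fintype n] [DecidableEq n] [CommRing R]

/-- The matrix of `v ↦ c v + φ(v) e`, i.e. `c` times a complex reflection with root `e` and
mirror `ker φ` when `c` is invertible; the linear form `φ` is encoded by its coefficient vector. -/
def scaledReflection (c : R) (e φ : n → R) : Matrix n n R := c • 1 + vecMulVec e φ

theorem scaledReflection_mulVec (c : R) (e φ v : n → R) :
    scaledReflection c e φ *ᵥ v = c • v + (φ ⬝ᵥ v) • e := by
  simp [scaledReflection, add_mulVec, smul_mulVec, vecMulVec_mulVec]

theorem mul_scaledReflection_mul {M N : Matrix n n R} (h : M * N = 1) (c : R) (e φ : n → R) :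
    M * scaledReflection c e φ * N = scaledReflection c (M *ᵥ e) (φ ᵥ* N) := by
  simp [scaledReflection, mul_add, add_mul, h, mul_vecMulVec, vecMulVec_mul]

theorem scaledReflection_mulVec_mem {m : Submodule R (n → R)} {e v : n → R} (he : e ∈ m)
    (hv : v ∈ m) (c : R) (φ : n → R) : scaledReflection c e φ *ᵥ v ∈ m := by
  rw [scaledReflection_mulVec]
  exact add_mem (m.smul_mem c hv) (m.smul_mem _ he)

theorem dotProduct_mulVec_smul_of_commute {c : R} {e φ : n → R} {M : Matrix n n R}
    (h : Commute (scaledReflection c e φ) M) (v : n → R) :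
    (φ ⬝ᵥ M *ᵥ v) • e = (φ ⬝ᵥ v) • M *ᵥ e := by
  have hv := congr_arg (· *ᵥ v) h.eq
  simpa [← mulVec_mulVec, scaledReflection_mulVec, mulVec_add, mulVec_smul] using hv

-- With `q = c (c + d)`, the product `r s` has trace `2 q + μ` and determinant `q ^ 2` on the plane
-- spanned by the roots, so for `q ≠ 0` over a field `hcdμ` says that the ratio of its two
-- eigenvalues there is a root of `X ^ 4 + X ^ 3 + X ^ 2 + X + 1`.
theorem scaledReflection_braid {c d μ : R} {e₁ e₂ φ₁ φ₂ : n → R}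
    (h₁ : φ₁ ⬝ᵥ e₁ = d) (h₂ : φ₂ ⬝ᵥ e₂ = d) (hμ : (φ₁ ⬝ᵥ e₂) * (φ₂ ⬝ᵥ e₁) = μ)
    (hcdμ : μ ^ 2 + 3 * (c * (c + d)) * μ + (c * (c + d)) ^ 2 = 0) :
    let r := scaledReflection c e₁ φ₁
    let s := scaledReflection c e₂ φ₂
    r * s * r * s * r = s * r * s * r * s := by
  intro _ _
  have hsq {e φ : n → R} (h : φ ⬝ᵥ e = d) :
      vecMulVec e φ * vecMulVec e φ = d • vecMulVec e φ := by
    rw [vecMulVec_mul_vecMulVec, h, vecMulVec_smul]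
  have htriple (e f φ ψ : n → R) :
      vecMulVec e φ * vecMulVec f ψ * vecMulVec e φ =
        ((φ ⬝ᵥ f) * (ψ ⬝ᵥ e)) • vecMulVec e φ := by
    simp [vecMulVec_mul_vecMulVec, vecMulVec_smul, smul_smul]
  have h := smul_one_add_braid_sub_braid (hsq h₁) (hsq h₂)
    (by rw [htriple, hμ]) (by rw [htriple, mul_comm, hμ]) c
  rwa [hcdμ, zero_smul, sub_eq_zero] at h

end ScaledReflection

theorem mem_mirrorStab_of_mulVec_mem {S : Subgroup (GL (Fin 3) ℂ)} {g : GL (Fin 3) ℂ}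
    {m : Submodule ℂ (Fin 3 → ℂ)} (hg : g ∈ S)
    (h : ∀ v ∈ m, (g : Matrix (Fin 3) (Fin 3) ℂ) *ᵥ v ∈ m) : g ∈ mirrorStab S m := by
  have hinj : Function.Injective (Matrix.mulVecLin (g : Matrix (Fin 3) (Fin 3) ℂ)) :=
    Matrix.mulVec_injective_of_isUnit g.isUnit
  exact ⟨hg, Submodule.eq_of_le_of_finrank_eq (Submodule.map_le_iff_le_comap.mpr h)
    (Submodule.equivMapOfInjective _ hinj m).finrank_eq.symm⟩

section SporadicGroup

variable {p : ℕ} {τ : ℂ}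

theorem uPar_mul_conj (p : ℕ) : uPar p * conj (uPar p) = 1 := by
  have h : uPar p = Complex.exp ((2 * Real.pi / (3 * p) : ℝ) * Complex.I) := by
    rw [uPar]
    push_cast
    ring_nf
  rw [Complex.mul_conj', h, Complex.norm_exp_ofReal_mul_I, Complex.ofReal_one, one_pow]

theorem R1S_eq_scaledReflection (p : ℕ) (τ : ℂ) :
    R1S p τ = scaledReflection (conj (uPar p)) (Pi.single 0 1)
      ![uPar p ^ 2 - conj (uPar p), τ, -uPar p * conj τ] := by
  ext i k
  fin_cases i <;> fin_cases k <;> simp [R1S, scaledReflection]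

theorem R2S_eq_scaledReflection (p : ℕ) (τ : ℂ) :
    R2S p τ = scaledReflection (conj (uPar p)) (Pi.single 1 1)
      ![-uPar p * conj τ, uPar p ^ 2 - conj (uPar p), τ] := by
  ext i k
  fin_cases i <;> fin_cases k <;> simp [R2S, scaledReflection]

theorem Jmat_pow_three : Jmat ^ 3 = 1 := by
  simp [Jmat, pow_succ, Matrix.one_fin_three]

theorem Jmat_mul_R1S (p : ℕ) (τ : ℂ) : Jmat * R1S p τ = R2S p τ * Jmat := by
  simp [Jmat, R1S, R2S]

theorem Jmat_sq_mulVec_single_zero : Jmat ^ 2 *ᵥ Pi.single 0 1 = Pi.single 2 1 := by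
  ext i
  fin_cases i <;> simp [Jmat, pow_two]

theorem lfun_apply (a b c : ℂ) (v : Fin 3 → ℂ) : lfun a b c v = ![a, b, c] ⬝ᵥ v := by
  simp [lfun, dotProduct, Fin.sum_univ_three]

theorem alphaPar_betaPar_eq_smul (p : ℕ) (τ : ℂ) :
    ![alphaPar p, betaPar p τ, conj (betaPar p τ)] =
      (conj (uPar p) ^ 2 - uPar p) • ![uPar p ^ 2 - conj (uPar p), τ, -uPar p * conj τ] := by
  have hu := uPar_mul_conj p
  have hα : alphaPar p = (conj (uPar p) ^ 2 - uPar p) * (uPar p ^ 2 - conj (uPar p)) := by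
    rw [alphaPar]
    linear_combination -(uPar p * conj (uPar p) + 2) * hu
  have hβ : conj (betaPar p τ) = (conj (uPar p) ^ 2 - uPar p) * (-uPar p * conj τ) := by
    simp only [betaPar, map_mul, map_sub, map_pow, Complex.conj_conj]
    linear_combination conj (uPar p) * conj τ * hu
  rw [smul_vec3, hα, hβ, betaPar]
  rfl

theorem mem_mirror1_iff {v : Fin 3 → ℂ} :
    v ∈ mirror1 p τ ↔ (conj (uPar p) ^ 2 - uPar p) *
      (![uPar p ^ 2 - conj (uPar p), τ, -uPar p * conj τ] ⬝ᵥ v) = 0 := by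
  rw [mirror1, LinearMap.mem_ker, lfun_apply, alphaPar_betaPar_eq_smul, smul_dotProduct,
    smul_eq_mul]

theorem mem_mirrorStab_mirror1_of_commute {S : Subgroup (GL (Fin 3) ℂ)} {r₁ g : GL (Fin 3) ℂ}
    (hr₁ : (r₁ : Matrix (Fin 3) (Fin 3) ℂ) = R1S p τ) (hg : g ∈ S) (hcomm : Commute r₁ g) :
    g ∈ mirrorStab S (mirror1 p τ) := by
  refine mem_mirrorStab_of_mulVec_mem hg fun v hv ↦ ?_
  rw [mem_mirror1_iff] at hv ⊢
  have hcomm_val : Commute (r₁ : Matrix (Fin 3) (Fin 3) ℂ) g := hcomm.units_val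
  rw [hr₁, R1S_eq_scaledReflection] at hcomm_val
  have h := congr_fun (dotProduct_mulVec_smul_of_commute hcomm_val v) 0
  simp only [Pi.smul_apply, Pi.single_eq_same, smul_eq_mul, mul_one] at h
  rw [h, ← mul_assoc, hv, zero_mul]

open Polynomial in
theorem charpoly_R1S_mul_Jmat (p : ℕ) (τ : ℂ) :
    (R1S p τ * Jmat).charpoly = X ^ 3 - C τ * X ^ 2 + C (conj τ) * X - 1 := by
  have hu : C (uPar p) * C (conj (uPar p)) = 1 := by rw [← C_mul, uPar_mul_conj, C_1]
  have hmul : R1S p τ * Jmat = !![τ, -uPar p * conj τ, uPar p ^ 2;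
      conj (uPar p), 0, 0; 0, conj (uPar p), 0] := by
    simp [R1S, Jmat]
  have hchar : (R1S p τ * Jmat).charmatrix =
      !![X - C τ, C (uPar p) * C (conj τ), -C (uPar p) ^ 2;
        -C (conj (uPar p)), X, 0; 0, -C (conj (uPar p)), X] := by
    rw [hmul]
    ext1 i k
    fin_cases i <;> fin_cases k <;> simp
  rw [Matrix.charpoly, hchar, det_fin_three]
  simp only [of_apply, cons_val', cons_val, cons_val_zero, cons_val_one, cons_val_fin_one]
  linear_combination (C (conj τ) * X - C (uPar p) * C (conj (uPar p)) - 1) * hu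

theorem conj_eq_self_of_sq_eq_add_one (hτ : τ ^ 2 = τ + 1) : conj τ = τ := by
  have hfactor : (τ - Real.goldenRatio) * (τ - Real.goldenConj) = 0 := by
    have hsum : (Real.goldenRatio + Real.goldenConj : ℂ) = 1 :=
      mod_cast Real.goldenRatio_add_goldenConj
    have hprod : (Real.goldenRatio * Real.goldenConj : ℂ) = -1 :=
      mod_cast Real.goldenRatio_mul_goldenConj
    linear_combination hτ - τ * hsum + hprod
  rcases mul_eq_zero.mp hfactor with h | h <;>
    rw [sub_eq_zero.mp h, Complex.conj_ofReal]

open Polynomial in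
theorem R1S_mul_Jmat_pow_five (p : ℕ) (hτ : τ ^ 2 = τ + 1) : (R1S p τ * Jmat) ^ 5 = 1 := by
  have hdvd : (R1S p τ * Jmat).charpoly * (X ^ 2 + C τ * X + 1) = X ^ 5 - 1 := by
    have hCτ : C τ ^ 2 = C τ + 1 := by simpa using congr_arg C hτ
    rw [charpoly_R1S_mul_Jmat, conj_eq_self_of_sq_eq_add_one hτ]
    linear_combination (X ^ 2 - X ^ 3) * hCτ
  have h := congr_arg (aeval (R1S p τ * Jmat)) hdvd
  rw [map_mul, Matrix.aeval_self_charpoly, zero_mul] at h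
  simpa [sub_eq_zero] using h.symm

theorem R1S_R2S_braid (p : ℕ) (hτ : τ ^ 2 = τ + 1) :
    R1S p τ * R2S p τ * R1S p τ * R2S p τ * R1S p τ =
      R2S p τ * R1S p τ * R2S p τ * R1S p τ * R2S p τ := by
  have hu := uPar_mul_conj p
  have hμ : (![uPar p ^ 2 - conj (uPar p), τ, -uPar p * τ] ⬝ᵥ Pi.single 1 1) *
      (![-uPar p * τ, uPar p ^ 2 - conj (uPar p), τ] ⬝ᵥ Pi.single 0 1) = -uPar p * τ ^ 2 := by
    simp only [dotProduct_single_one, cons_val_zero, cons_val_one]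
    ring
  rw [R1S_eq_scaledReflection, R2S_eq_scaledReflection, conj_eq_self_of_sq_eq_add_one hτ]
  refine scaledReflection_braid (d := uPar p ^ 2 - conj (uPar p)) (μ := -uPar p * τ ^ 2)
    (by simp) (by simp) hμ ?_
  have hq : conj (uPar p) * (conj (uPar p) + (uPar p ^ 2 - conj (uPar p))) = uPar p := by
    linear_combination uPar p * hu
  rw [hq]
  linear_combination uPar p ^ 2 * (τ ^ 2 + τ - 1) * hτ

theorem coe_conj_eq_R2S {r₁ j : GL (Fin 3) ℂ}
    (hr₁ : (r₁ : Matrix (Fin 3) (Fin 3) ℂ) = R1S p τ)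
    (hj : (j : Matrix (Fin 3) (Fin 3) ℂ) = Jmat) :
    ((j * r₁ * j⁻¹ : GL (Fin 3) ℂ) : Matrix (Fin 3) (Fin 3) ℂ) = R2S p τ := by
  rw [Units.val_mul, Units.mul_inv_eq_iff_eq_mul, Units.val_mul, hr₁, hj, Jmat_mul_R1S]

theorem conj_mem_mirrorStab {S : Subgroup (GL (Fin 3) ℂ)} {r₁ g : GL (Fin 3) ℂ}
    {m : Submodule ℂ (Fin 3 → ℂ)} (hr₁ : (r₁ : Matrix (Fin 3) (Fin 3) ℂ) = R1S p τ)
    (hS : g * r₁ * g⁻¹ ∈ S)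
    (hm : (g : Matrix (Fin 3) (Fin 3) ℂ) *ᵥ Pi.single 0 1 ∈ m) :
    g * r₁ * g⁻¹ ∈ mirrorStab S m := by
  refine mem_mirrorStab_of_mulVec_mem hS fun v hv ↦ ?_
  rw [Units.val_mul, Units.val_mul, hr₁, R1S_eq_scaledReflection,
    mul_scaledReflection_mul g.mul_inv]
  exact scaledReflection_mulVec_mem hm hv _ _

theorem conj_mem_mirrorStab_closure {r₁ r₂ r₃ j : GL (Fin 3) ℂ}
    {m : Submodule ℂ (Fin 3 → ℂ)} (h₂ : j * r₁ * j⁻¹ = r₂) (h₃ : j * r₂ * j⁻¹ = r₃)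
    (hr₁ : (r₁ : Matrix (Fin 3) (Fin 3) ℂ) = R1S p τ)
    (hj : (j : Matrix (Fin 3) (Fin 3) ℂ) = Jmat) (hm : R2S p τ *ᵥ Pi.single 2 1 ∈ m) :
    r₂ * r₃ * r₂⁻¹ ∈ mirrorStab (Subgroup.closure {r₁, j}) m := by
  have hr₁S : r₁ ∈ Subgroup.closure {r₁, j} := Subgroup.subset_closure (by simp)
  have hjS : j ∈ Subgroup.closure {r₁, j} := Subgroup.subset_closure (by simp)
  have hgS : r₂ * j ^ 2 ∈ Subgroup.closure {r₁, j} :=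
    mul_mem (h₂ ▸ mul_mem (mul_mem hjS hr₁S) (inv_mem hjS)) (pow_mem hjS 2)
  have hroot : ((r₂ * j ^ 2 : GL (Fin 3) ℂ) : Matrix (Fin 3) (Fin 3) ℂ) *ᵥ Pi.single 0 1 =
      R2S p τ *ᵥ Pi.single 2 1 := by
    rw [Units.val_mul, Units.val_pow_eq_pow_val, ← h₂, coe_conj_eq_R2S hr₁ hj, hj,
      ← mulVec_mulVec, Jmat_sq_mulVec_single_zero]
  have hconj : r₂ * r₃ * r₂⁻¹ = r₂ * j ^ 2 * r₁ * (r₂ * j ^ 2)⁻¹ := by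
    rw [← h₃, ← h₂]
    group
  rw [hconj]
  exact conj_mem_mirrorStab hr₁ (mul_mem (mul_mem hgS hr₁S) (inv_mem hgS)) (hroot ▸ hm)

theorem stmt18_general {p : ℕ} (_hp : p ≠ 0) {τ : ℂ} (hτ : τ ^ 2 = τ + 1)
    (r₁ j : GL (Fin 3) ℂ)
    (hr₁ : (↑r₁ : Matrix (Fin 3) (Fin 3) ℂ) = R1S p τ)
    (hj : (↑j : Matrix (Fin 3) (Fin 3) ℂ) = Jmat) :
    Subgroup.closure
        (mirrorStab (Subgroup.closure {r₁, j}) (mirror1 p τ) ∪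
          mirrorStab (Subgroup.closure {r₁, j})
            (Submodule.span ℂ
              {Pi.single 0 1, (R2S p τ).mulVec (Pi.single 2 1)})) =
      Subgroup.closure {r₁, j} := by
  set S := Subgroup.closure {r₁, j}
  obtain ⟨r₂, h₂⟩ : ∃ r₂, j * r₁ * j⁻¹ = r₂ := ⟨_, rfl⟩
  obtain ⟨r₃, h₃⟩ : ∃ r₃, j * r₂ * j⁻¹ = r₃ := ⟨_, rfl⟩
  have hr₂ : (r₂ : Matrix (Fin 3) (Fin 3) ℂ) = R2S p τ := h₂ ▸ coe_conj_eq_R2S hr₁ hj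
  have hj_pow : j ^ 3 = 1 := Units.ext (by simp [hj, Jmat_pow_three])
  have hrj_pow : (r₁ * j) ^ 5 = 1 := Units.ext (by simp [hr₁, hj, R1S_mul_Jmat_pow_five p hτ])
  have hbraid : r₁ * r₂ * r₁ * r₂ * r₁ = r₂ * r₁ * r₂ * r₁ * r₂ :=
    Units.ext (by simp only [Units.val_mul, hr₁, hr₂, R1S_R2S_braid p hτ])
  refine le_antisymm ((Subgroup.closure_le S).mpr (Set.union_subset (fun _ h ↦ h.1) fun _ h ↦ h.1))
    (closure_pair_le_of_braid h₂ h₃ hj_pow hrj_pow hbraid (fun g hg hcomm ↦ ?_) ?_)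
  · exact Subgroup.subset_closure (.inl (mem_mirrorStab_mirror1_of_commute hr₁ hg hcomm))
  · exact Subgroup.subset_closure (.inr (conj_mem_mirrorStab_closure h₂ h₃ hr₁ hj
      (Submodule.subset_span (by simp))))

end SporadicGroup

/-- For `τ = (1+√5)/2` and `p = 10`, the lattice `S(p,τ)` is generated by the
union of the stabilizers of the mirror of `R₁` and of the mirror
`span{e₁, R₂·e₃}` of the complex reflection `(R₁·R₂R₃R₂⁻¹)³`. -/
theorem stmt18 (p : ℕ) (hp : p = 10)
    (τ : ℂ) (hτ : τ = (1 + Real.sqrt 5) / 2)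
    (r₁ j : GL (Fin 3) ℂ)
    (hr₁ : (↑r₁ : Matrix (Fin 3) (Fin 3) ℂ) = R1S p τ)
    (hj : (↑j : Matrix (Fin 3) (Fin 3) ℂ) = Jmat) :
    Subgroup.closure
        (mirrorStab (Subgroup.closure {r₁, j}) (mirror1 p τ) ∪
          mirrorStab (Subgroup.closure {r₁, j})
            (Submodule.span ℂ
              {Pi.single 0 1, (R2S p τ).mulVec (Pi.single 2 1)})) =
      Subgroup.closure {r₁, j} := by
  have hτ_sq : τ ^ 2 = τ + 1 := by rw [hτ]; exact_mod_cast Real.goldenRatio_sq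
  exact stmt18_general (by simp [hp]) hτ_sq r₁ j hr₁ hj
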